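/- Let R be a commutative ring and f ∈ R. A complex E in D(R) belongs to Loc(R/(f))^⊥ = Loc(R_f) if and only if every homology module H_n(E) is an R_f-module, i.e. multiplication by f is bijective on each H_n(E). -/

import Mathlib

open CategoryTheory CategoryTheory.Limits CategoryTheory.Pretriangulated ZeroObject

universe w w' v u

section TriangulatedDefs

variable {T : Type u} [Category.{v} T] [Preadditive T] [HasZeroObject T]
  [HasShift T ℤ] [∀ n : ℤ, (shiftFunctor T n).Additive] [Pretriangulated T]

/-- A localizing subcategory of a (pre)triangulated category, encoded as a set of
objects: it is closed under isomorphisms, contains the zero object, is stable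
under shifts, closed under cones of distinguished triangles (hence a full
triangulated subcategory), and closed under arbitrary small coproducts
(phrased via colimit cofans, so that no global existence of coproducts
is needed). -/
structure IsLocalizingSub (S : Set T) : Prop where
  zero_mem : (0 : T) ∈ S
  mem_of_iso : ∀ {x y : T}, (x ≅ y) → x ∈ S → y ∈ S
  shift_mem : ∀ (n : ℤ) {x : T}, x ∈ S → x⟦n⟧ ∈ S
  cone_mem : ∀ (Tr : Triangle T), Tr ∈ distinguishedTriangles →
    Tr.obj₁ ∈ S → Tr.obj₂ ∈ S → Tr.obj₃ ∈ S
  coprod_mem : ∀ {ι : Type w} (f : ι → T) (c : Cofan f), IsColimit c →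
    (∀ i, f i ∈ S) → c.pt ∈ S

/-- A colocalizing subcategory: as `IsLocalizingSub` but with products instead
of coproducts. -/
structure IsColocalizingSub (S : Set T) : Prop where
  zero_mem : (0 : T) ∈ S
  mem_of_iso : ∀ {x y : T}, (x ≅ y) → x ∈ S → y ∈ S
  shift_mem : ∀ (n : ℤ) {x : T}, x ∈ S → x⟦n⟧ ∈ S
  cone_mem : ∀ (Tr : Triangle T), Tr ∈ distinguishedTriangles →
    Tr.obj₁ ∈ S → Tr.obj₂ ∈ S → Tr.obj₃ ∈ S
  prod_mem : ∀ {ι : Type w} (f : ι → T) (c : Fan f), IsLimit c →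
    (∀ i, f i ∈ S) → c.pt ∈ S

/-- `Loc S`: the smallest localizing subcategory containing the set of
objects `S` (the intersection of all localizing subcategories containing it). -/
def Loc (S : Set T) : Set T :=
  ⋂₀ {L : Set T | IsLocalizingSub.{w} L ∧ S ⊆ L}

/-- The right orthogonal of a set of objects. -/
def rightOrth (C : Set T) : Set T :=
  {x : T | ∀ ⦃c : T⦄, c ∈ C → ∀ (g : c ⟶ x), g = 0}

end TriangulatedDefs

section CompactDefs

variable {T : Type u} [Category.{v} T] [Preadditive T]

/-- The canonical comparison map `⨁ᵢ Hom(x, fᵢ) →+ Hom(x, ∐ f)` associated to a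
cofan `c` on a family `f`. -/
noncomputable def cofanHomComparison {ι : Type w} (x : T) (f : ι → T) (c : Cofan f) :
    (Π₀ i, (x ⟶ f i)) →+ (x ⟶ c.pt) :=
  letI := Classical.decEq ι
  DFinsupp.sumAddHom (fun i => AddMonoidHom.mk' (fun φ => φ ≫ c.inj i)
    (fun φ ψ => Preadditive.add_comp _ _ _ φ ψ (c.inj i)))

/-- An object `x` is compact if `Hom(x, -)` commutes with arbitrary small
coproducts, i.e. for every colimit cofan on a family `f`, the canonical map
`⨁ᵢ Hom(x, fᵢ) → Hom(x, ∐ f)` is bijective. -/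
def IsCompactObj (x : T) : Prop :=
  ∀ ⦃ι : Type w⦄ (f : ι → T) (c : Cofan f), IsColimit c →
    Function.Bijective (cofanHomComparison x f c)

end CompactDefs

section DR

variable (R : Type u) [CommRing R] [HasDerivedCategory.{w'} (ModuleCat.{u} R)]

/-- The `R`-module `M`, regarded as an object of the derived category `D(R)`,
as a complex concentrated in degree `0`. -/
noncomputable def smod (M : ModuleCat.{u} R) : DerivedCategory (ModuleCat.{u} R) :=
  (DerivedCategory.singleFunctor (ModuleCat.{u} R) 0).obj M

end DR

section Chain

variable {S : Type u} [CommRing S]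

/-- `z` is a cycle representing the homology class `x`. -/
def HRep (K : CochainComplex (ModuleCat.{u} S) ℤ) (n : ℤ) (z : K.X n) (x : K.homology n) : Prop :=
  ∃ c : K.cycles n, K.iCycles n c = z ∧ K.homologyπ n c = x

lemma HRep.exists_rep (K : CochainComplex (ModuleCat.{u} S) ℤ) (n : ℤ) (x : K.homology n) :
    ∃ z, HRep K n z x := by
  obtain ⟨c, hc⟩ := (ModuleCat.epi_iff_surjective (K.homologyπ n)).1 inferInstance x
  exact ⟨_, c, rfl, hc⟩

lemma HRep.d_eq_zero {K : CochainComplex (ModuleCat.{u} S) ℤ} {n : ℤ} {z : K.X n}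
    {x : K.homology n} (h : HRep K n z x) (m : ℤ) : K.d n m z = 0 := by
  obtain ⟨c, rfl, rfl⟩ := h
  rw [← ConcreteCategory.comp_apply, K.iCycles_d]; rfl

lemma HRep.exists_class {K : CochainComplex (ModuleCat.{u} S) ℤ} {n : ℤ} {z : K.X n}
    (h : K.d n (n+1) z = 0) : ∃ x, HRep K n z x := by
  have hex := (ShortComplex.mk (K.iCycles n) (K.d n (n+1)) (K.iCycles_d _ _)).exact_of_f_is_kernel
    (K.cyclesIsKernel n (n+1) (by simp))
  obtain ⟨c, hc⟩ := (ShortComplex.moduleCat_exact_iff _).1 hex z h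
  exact ⟨_, c, hc, rfl⟩

lemma HRep.map {K L : CochainComplex (ModuleCat.{u} S) ℤ} (φ : K ⟶ L) {n : ℤ} {z : K.X n}
    {x : K.homology n} (h : HRep K n z x) :
    HRep L n (φ.f n z) (HomologicalComplex.homologyMap φ n x) := by
  obtain ⟨c, rfl, rfl⟩ := h
  refine ⟨HomologicalComplex.cyclesMap φ n c, ?_, ?_⟩
  · rw [← ConcreteCategory.comp_apply, ← ConcreteCategory.comp_apply,
      HomologicalComplex.cyclesMap_i]
  · rw [← ConcreteCategory.comp_apply, ← ConcreteCategory.comp_apply,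
      HomologicalComplex.homologyπ_naturality]

lemma HRep.add {K : CochainComplex (ModuleCat.{u} S) ℤ} {n : ℤ} {z z' : K.X n}
    {x x' : K.homology n} (h : HRep K n z x) (h' : HRep K n z' x') :
    HRep K n (z + z') (x + x') := by
  obtain ⟨c, rfl, rfl⟩ := h
  obtain ⟨c', rfl, rfl⟩ := h'
  exact ⟨c + c', by simp, by simp⟩

lemma HRep.smul {K : CochainComplex (ModuleCat.{u} S) ℤ} {n : ℤ} {z : K.X n}
    {x : K.homology n} (h : HRep K n z x) (a : S) :
    HRep K n (a • z) (a • x) := by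
  obtain ⟨c, rfl, rfl⟩ := h
  exact ⟨a • c, by simp, by simp⟩

lemma HRep.sub {K : CochainComplex (ModuleCat.{u} S) ℤ} {n : ℤ} {z z' : K.X n}
    {x x' : K.homology n} (h : HRep K n z x) (h' : HRep K n z' x') :
    HRep K n (z - z') (x - x') := by
  obtain ⟨c, rfl, rfl⟩ := h
  obtain ⟨c', rfl, rfl⟩ := h'
  exact ⟨c - c', by simp, by simp⟩

lemma HRep.unique {K : CochainComplex (ModuleCat.{u} S) ℤ} {n : ℤ} {z : K.X n}
    {x x' : K.homology n} (h : HRep K n z x) (h' : HRep K n z x') : x = x' := by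
  obtain ⟨c, hc, rfl⟩ := h
  obtain ⟨c', hc', rfl⟩ := h'
  have := (ModuleCat.mono_iff_injective (K.iCycles n)).1 inferInstance (hc.trans hc'.symm)
  rw [this]

lemma HRep.eq_zero_iff {K : CochainComplex (ModuleCat.{u} S) ℤ} {n : ℤ} {z : K.X n}
    {x : K.homology n} (h : HRep K n z x) : x = 0 ↔ ∃ w : K.X (n-1), K.d (n-1) n w = z := by
  have hex := (ShortComplex.mk (K.toCycles (n-1) n) (K.homologyπ n) (by simp)).exact_of_g_is_cokernel
    (K.homologyIsCokernel (n-1) n (by simp))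
  obtain ⟨c, hc, rfl⟩ := h
  constructor
  · intro h0
    obtain ⟨w, hw⟩ := (ShortComplex.moduleCat_exact_iff _).1 hex c h0
    refine ⟨w, ?_⟩
    rw [← hc, ← hw]
    change _ = (K.iCycles n) ((K.toCycles (n-1) n) w)
    rw [← ConcreteCategory.comp_apply, K.toCycles_i]
  · rintro ⟨w, hw⟩
    have : c = K.toCycles (n-1) n w := by
      apply (ModuleCat.mono_iff_injective (K.iCycles n)).1 inferInstance
      rw [hc, ← hw, ← ConcreteCategory.comp_apply, K.toCycles_i]
    rw [this, ← ConcreteCategory.comp_apply, K.toCycles_comp_homologyπ]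
    rfl

end Chain

section Coprod

open Classical in
/-- The projection from a coproduct in a preadditive category. -/
noncomputable def cproj {T : Type v} [Category.{w} T] [Preadditive T] {ι : Type u} {X : ι → T}
    {c : Cofan X} (hc : IsColimit c) (i : ι) : c.pt ⟶ X i :=
  Cofan.IsColimit.desc hc (fun j => if h : j = i then eqToHom (by rw [h]) else 0)

lemma inj_cproj_self {T : Type v} [Category.{w} T] [Preadditive T] {ι : Type u} {X : ι → T}
    {c : Cofan X} (hc : IsColimit c) (i : ι) : c.inj i ≫ cproj hc i = 𝟙 _ := by
  simp [cproj]

lemma inj_cproj_ne {T : Type v} [Category.{w} T] [Preadditive T] {ι : Type u} {X : ι → T}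
    {c : Cofan X} (hc : IsColimit c) {i j : ι} (h : j ≠ i) : c.inj j ≫ cproj hc i = 0 := by
  simp [cproj, h]

variable {S : Type u} [CommRing S]

lemma modcat_finite {ι : Type u} {M : ι → ModuleCat.{u} S} {c : Cofan M} (hc : IsColimit c)
    (π : ∀ i, c.pt ⟶ M i) (h1 : ∀ i, c.inj i ≫ π i = 𝟙 _)
    (h2 : ∀ i j, j ≠ i → c.inj j ≫ π i = 0) (z : c.pt) :
    ∃ s : Finset ι, ∀ t, s ⊆ t → z = ∑ i ∈ t, c.inj i (π i z) := by
  classical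
  have htop : (⨆ i, LinearMap.range (c.inj i).hom) = ⊤ := by
    rw [← Submodule.ker_mkQ (⨆ i, LinearMap.range (c.inj i).hom), LinearMap.ker_eq_top]
    have : ModuleCat.ofHom (Submodule.mkQ (⨆ i, LinearMap.range (c.inj i).hom)) = 0 := by
      apply Cofan.IsColimit.hom_ext hc
      intro i
      ext m
      simp only [ModuleCat.hom_comp, ModuleCat.hom_ofHom, LinearMap.coe_comp, Function.comp_apply,
        Submodule.mkQ_apply, comp_zero, ModuleCat.hom_zero, LinearMap.zero_apply,
        Submodule.Quotient.mk_eq_zero]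
      exact Submodule.mem_iSup_of_mem i ⟨m, rfl⟩
    exact congrArg ModuleCat.Hom.hom this
  have hz : z ∈ (⨆ i, LinearMap.range (c.inj i).hom) := by rw [htop]; trivial
  induction hz using Submodule.iSup_induction' with
  | mem i x hx =>
    obtain ⟨m, rfl⟩ := hx
    refine ⟨{i}, fun t ht => ?_⟩
    rw [Finset.sum_eq_single i]
    · have := congrArg (fun φ => φ m) (congrArg ModuleCat.Hom.hom (h1 i))
      simp only [ModuleCat.hom_comp, LinearMap.coe_comp, Function.comp_apply] at this
      exact (congrArg _ this).symm
    · intro j _ hj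
      have := congrArg (fun φ => φ m) (congrArg ModuleCat.Hom.hom (h2 j i hj.symm))
      simp only [ModuleCat.hom_comp, LinearMap.coe_comp, Function.comp_apply] at this
      exact (congrArg _ this).trans (map_zero _)
    · intro h
      exact absurd (ht (by simp)) h
  | zero => exact ⟨∅, fun t _ => by simp⟩
  | add x y _ _ hx hy =>
    obtain ⟨s, hs⟩ := hx
    obtain ⟨s', hs'⟩ := hy
    refine ⟨s ∪ s', fun t ht => ?_⟩
    simp only [map_add, Finset.sum_add_distrib]
    rw [← hs t (Finset.subset_union_left.trans ht), ← hs' t (Finset.subset_union_right.trans ht)]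

/-- evaluation of a colimit cofan of complexes -/
noncomputable def evalCofan {ι : Type u} {K : ι → CochainComplex (ModuleCat.{u} S) ℤ} (c : Cofan K) (n : ℤ) :
    Cofan (fun i => (K i).X n) := Cofan.mk (c.pt.X n) (fun i => (c.inj i).f n)

noncomputable def evalCofanIsColimit {ι : Type u} {K : ι → CochainComplex (ModuleCat.{u} S) ℤ} {c : Cofan K}
    (hc : IsColimit c) (n : ℤ) : IsColimit (evalCofan c n) :=
  isColimitCofanMkObjOfIsColimit (HomologicalComplex.eval _ _ n) K (fun i => c.inj i)
    (hc.ofIsoColimit (Cofan.ext (Iso.refl _) (by simp)))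

lemma homology_finite {ι : Type u} {K : ι → CochainComplex (ModuleCat.{u} S) ℤ} {c : Cofan K}
    (hc : IsColimit c) (n : ℤ) (x : c.pt.homology n) :
    ∃ s : Finset ι, x = ∑ i ∈ s, HomologicalComplex.homologyMap (c.inj i) n
      (HomologicalComplex.homologyMap (cproj hc i) n x) := by
  obtain ⟨z, hz⟩ := HRep.exists_rep _ _ x
  obtain ⟨s, hs⟩ := modcat_finite (evalCofanIsColimit hc n) (fun i => (cproj hc i).f n)
    (fun i => by
      have := congrArg (fun φ => HomologicalComplex.Hom.f φ n) (inj_cproj_self hc i)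
      simpa [evalCofan] using this)
    (fun i j h => by
      have := congrArg (fun φ => HomologicalComplex.Hom.f φ n) (inj_cproj_ne hc h)
      simpa [evalCofan] using this) z
  refine ⟨s, HRep.unique hz ?_⟩
  rw [hs s subset_rfl]
  clear hs
  induction s using Finset.cons_induction with
  | empty => exact ⟨0, map_zero _, map_zero _⟩
  | cons i s hi ih =>
    rw [Finset.sum_cons, Finset.sum_cons]
    exact HRep.add ((hz.map _).map _) ih

lemma quasiIso_of_bijective {K L : CochainComplex (ModuleCat.{u} S) ℤ} (φ : K ⟶ L)
    (h : ∀ n, Function.Bijective (HomologicalComplex.homologyMap φ n)) : QuasiIso φ := by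
  rw [quasiIso_iff]
  intro n
  rw [quasiIsoAt_iff_isIso_homologyMap]
  exact (ConcreteCategory.isIso_iff_bijective _).2 (h n)

lemma bijective_of_quasiIso {K L : CochainComplex (ModuleCat.{u} S) ℤ} (φ : K ⟶ L) [QuasiIso φ] (n : ℤ) :
    Function.Bijective (HomologicalComplex.homologyMap φ n) := 
  (ConcreteCategory.isIso_iff_bijective _).1 inferInstance

lemma quasiIso_coprod {ι : Type u} {K L : ι → CochainComplex (ModuleCat.{u} S) ℤ} {c : Cofan K}
    (hc : IsColimit c) {d : Cofan L} (hd : IsColimit d) (φ : ∀ i, K i ⟶ L i)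
    (hφ : ∀ i, QuasiIso (φ i)) (Φ : c.pt ⟶ d.pt) (hΦ : ∀ i, c.inj i ≫ Φ = φ i ≫ d.inj i) :
    QuasiIso Φ := by
  classical
  have hp : ∀ i, Φ ≫ cproj hd i = cproj hc i ≫ φ i := by
    intro i
    apply Cofan.IsColimit.hom_ext hc
    intro j
    rw [← Category.assoc, ← Category.assoc, hΦ]
    by_cases h : j = i
    · subst h
      rw [Category.assoc, inj_cproj_self, inj_cproj_self]; simp
    · rw [Category.assoc, inj_cproj_ne _ h, inj_cproj_ne _ h]; simp
  have happ : ∀ {A B C : CochainComplex (ModuleCat.{u} S) ℤ} (a : A ⟶ B) (b : B ⟶ C) (n : ℤ) x, 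
    HomologicalComplex.homologyMap b n (HomologicalComplex.homologyMap a n x) = 
      HomologicalComplex.homologyMap (a ≫ b) n x := by
    intros; rw [HomologicalComplex.homologyMap_comp]; rfl
  apply quasiIso_of_bijective
  intro n
  constructor
  · rw [injective_iff_map_eq_zero]
    intro x hx
    obtain ⟨s, hs⟩ := homology_finite hc n x
    rw [hs]
    apply Finset.sum_eq_zero
    intro i _
    have : HomologicalComplex.homologyMap (cproj hc i) n x = 0 := by
      apply (bijective_of_quasiIso (φ i) n).1
      rw [happ, ← hp, ← happ, hx, map_zero, map_zero]
    rw [this, map_zero]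
  · intro y
    obtain ⟨s, hs⟩ := homology_finite hd n y
    choose x hx using fun i => (bijective_of_quasiIso (φ i) n).2
      (HomologicalComplex.homologyMap (cproj hd i) n y)
    refine ⟨∑ i ∈ s, HomologicalComplex.homologyMap (c.inj i) n (x i), ?_⟩
    rw [map_sum]
    conv_rhs => rw [hs]
    apply Finset.sum_congr rfl
    intro i _
    rw [happ, hΦ, ← happ, hx]

end Coprod

section Qcoprod
variable {S : Type u} [CommRing S] [HasDerivedCategory.{w'} (ModuleCat.{u} S)]
open DerivedCategory

lemma Q_map_zero_homotopy {K L : CochainComplex (ModuleCat.{u} S) ℤ} (b : K ⟶ L) (h : Q.map b = 0) :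
    ∃ (K' : CochainComplex (ModuleCat.{u} S) ℤ) (t : K' ⟶ K), QuasiIso t ∧ Nonempty (Homotopy (t ≫ b) 0) := by
  have h' : Qh.map ((HomotopyCategory.quotient _ _).map b) = Qh.map ((HomotopyCategory.quotient _ _).map 0) := by
    have h0 := (quotientCompQhIso (ModuleCat.{u} S)).hom.naturality b
    have h1 := (quotientCompQhIso (ModuleCat.{u} S)).hom.naturality (0 : K ⟶ L)
    rw [h, comp_zero] at h0
    rw [Q.map_zero, comp_zero] at h1
    exact (cancel_mono ((quotientCompQhIso (ModuleCat.{u} S)).hom.app L)).1 (h0.trans h1.symm)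
  rw [MorphismProperty.map_eq_iff_precomp Qh (HomotopyCategory.quasiIso _ _)] at h'
  obtain ⟨X, s, hs, hX⟩ := h'
  obtain ⟨K', rfl⟩ := HomotopyCategory.quotient_obj_surjective X
  obtain ⟨t, rfl⟩ := (HomotopyCategory.quotient _ _).map_surjective s
  refine ⟨K', t, ?_, ⟨HomotopyCategory.homotopyOfEq _ _ ?_⟩⟩
  · rwa [HomotopyCategory.quotient_map_mem_quasiIso_iff] at hs
  · rw [← Functor.map_comp, ← Functor.map_comp, comp_zero] at hX
    exact hX

lemma eval_hom_ext {ι : Type u} {K : ι → CochainComplex (ModuleCat.{u} S) ℤ} {c : Cofan K}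
    (hc : IsColimit c) (n : ℤ) {M : ModuleCat.{u} S} (p q : c.pt.X n ⟶ M)
    (h : ∀ i, (c.inj i).f n ≫ p = (c.inj i).f n ≫ q) : p = q :=
  Cofan.IsColimit.hom_ext (evalCofanIsColimit hc n) p q h

lemma eval_exists {ι : Type u} {K : ι → CochainComplex (ModuleCat.{u} S) ℤ} {c : Cofan K}
    (hc : IsColimit c) (n : ℤ) {M : ModuleCat.{u} S} (g : ∀ i, (K i).X n ⟶ M) :
    ∃ p : c.pt.X n ⟶ M, ∀ i, (c.inj i).f n ≫ p = g i :=
  ⟨Cofan.IsColimit.desc (evalCofanIsColimit hc n) g, 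
    fun i => Cofan.IsColimit.fac (evalCofanIsColimit hc n) g i⟩

lemma coprod_homotopy_zero {ι : Type u} {K : ι → CochainComplex (ModuleCat.{u} S) ℤ} {c : Cofan K}
    (hc : IsColimit c) {L : CochainComplex (ModuleCat.{u} S) ℤ} (a : c.pt ⟶ L)
    (h : ∀ i, Nonempty (Homotopy (c.inj i ≫ a) 0)) : Nonempty (Homotopy a 0) := by
  have h := fun i => (h i).some
  choose H hH using fun n m => eval_exists hc n (fun i => (h i).hom n m)
  refine ⟨{ hom := H, zero := ?_, comm := ?_ }⟩
  · intro n m hnm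
    refine eval_hom_ext hc n _ _ (fun i => ?_)
    rw [hH, (h i).zero n m hnm, comp_zero]
  · intro n
    refine eval_hom_ext hc n _ _ (fun i => ?_)
    have hi := (h i).comm n
    rw [dNext_eq _ (show (ComplexShape.up ℤ).Rel n (n+1) by simp),
      prevD_eq _ (show (ComplexShape.up ℤ).Rel (n-1) n by simp)] at hi ⊢
    simp only [HomologicalComplex.zero_f, add_zero, Preadditive.comp_add, HomologicalComplex.comp_f] at hi ⊢
    rw [hi, reassoc_of% (hH n (n-1)), HomologicalComplex.Hom.comm_assoc, hH]

noncomputable def QCofan {ι : Type u} {K : ι → CochainComplex (ModuleCat.{u} S) ℤ} (c : Cofan K) :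
    Cofan (fun i => Q.obj (K i)) := Cofan.mk (Q.obj c.pt) (fun i => Q.map (c.inj i))

lemma QCofan_uniq {ι : Type u} {K : ι → CochainComplex (ModuleCat.{u} S) ℤ} {c : Cofan K}
    (hc : IsColimit c) {Y : DerivedCategory (ModuleCat.{u} S)} (g : Q.obj c.pt ⟶ Y)
    (h : ∀ i, Q.map (c.inj i) ≫ g = 0) : g = 0 := by
  obtain ⟨Y', ⟨e⟩⟩ : ∃ Y', Nonempty (Q.obj Y' ≅ Y) := ⟨_, ⟨Q.objObjPreimageIso Y⟩⟩
  suffices g ≫ e.inv = 0 by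
    rw [← cancel_mono e.inv, this, zero_comp]
  obtain ⟨Y'', a, s, hs, ha⟩ := left_fac (g ≫ e.inv)
  have h1 : ∀ i, Q.map (c.inj i ≫ a) = 0 := fun i => by
    rw [← cancel_mono (inv (Q.map s)), Q.map_comp, Category.assoc, ← ha, reassoc_of% (h i)]; simp
  choose K' t ht ho using fun i => Q_map_zero_homotopy _ (h1 i)
  let c' : Cofan K' := Cofan.mk (∐ K') (Sigma.ι K')
  have hc' : IsColimit c' := coproductIsCoproduct K'
  let T : c'.pt ⟶ c.pt := Cofan.IsColimit.desc hc' (fun i => t i ≫ c.inj i)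
  have hT : ∀ i, c'.inj i ≫ T = t i ≫ c.inj i := fun i => Cofan.IsColimit.fac hc' _ i
  have : QuasiIso T := quasiIso_coprod hc' hc t ht T hT
  obtain ⟨H⟩ := coprod_homotopy_zero hc' (T ≫ a) (fun i => by
    rw [reassoc_of% (hT i)]; exact ho i)
  have := DerivedCategory.Q_map_eq_of_homotopy _ H
  rw [Q.map_zero, Q.map_comp] at this
  have : Q.map a = 0 := by rw [← cancel_epi (Q.map T), this, comp_zero]
  rw [ha, this, zero_comp]

lemma QCofan_exists {ι : Type u} {K : ι → CochainComplex (ModuleCat.{u} S) ℤ} {c : Cofan K}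
    (hc : IsColimit c) {Y : DerivedCategory (ModuleCat.{u} S)} (g : ∀ i, Q.obj (K i) ⟶ Y) :
    ∃ G : Q.obj c.pt ⟶ Y, ∀ i, Q.map (c.inj i) ≫ G = g i := by
  obtain ⟨Y', ⟨e⟩⟩ : ∃ Y', Nonempty (Q.obj Y' ≅ Y) := ⟨_, ⟨Q.objObjPreimageIso Y⟩⟩
  choose K' t ht a ha using fun i => right_fac (g i ≫ e.inv)
  let c' : Cofan K' := Cofan.mk (∐ K') (Sigma.ι K')
  have hc' : IsColimit c' := coproductIsCoproduct K'
  let T : c'.pt ⟶ c.pt := Cofan.IsColimit.desc hc' (fun i => t i ≫ c.inj i)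
  have hT : ∀ i, c'.inj i ≫ T = t i ≫ c.inj i := fun i => Cofan.IsColimit.fac hc' _ i
  have : QuasiIso T := quasiIso_coprod hc' hc t (fun i => (isIso_Q_map_iff_quasiIso _ _).1 (ht i)) T hT
  refine ⟨inv (Q.map T) ≫ Q.map (Cofan.IsColimit.desc hc' a) ≫ e.hom, fun i => ?_⟩
  have := ht i
  rw [← cancel_epi (Q.map (t i)), ← Q.map_comp_assoc, ← hT, Q.map_comp_assoc, IsIso.hom_inv_id_assoc,
    ← Q.map_comp_assoc, Cofan.IsColimit.fac, ← cancel_mono e.inv]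
  simp [ha]

lemma QCofanIsColimit {ι : Type u} {K : ι → CochainComplex (ModuleCat.{u} S) ℤ} {c : Cofan K}
    (hc : IsColimit c) : Nonempty (IsColimit (QCofan c)) := by
  choose G hG using fun (s : Cofan (fun i => Q.obj (K i))) => QCofan_exists hc (fun i => s.inj i)
  refine ⟨Cofan.IsColimit.mk _ G (fun s i => hG s i) (fun s m hm => ?_)⟩
  have e := QCofan_uniq hc ((show Q.obj c.pt ⟶ s.pt from m) - G s) (fun i => by
    refine (Preadditive.comp_sub (P := Q.obj (K i)) (Q := Q.obj c.pt) (Q.map (c.inj i)) m (G s)).trans ?_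
    rw [hG]
    exact sub_eq_zero.2 (hm i))
  exact sub_eq_zero.1 e

noncomputable abbrev HH (n : ℤ) : DerivedCategory (ModuleCat.{u} S) ⥤ ModuleCat.{u} S := homologyFunctor (ModuleCat.{u} S) n

noncomputable def hEquiv (K : CochainComplex (ModuleCat.{u} S) ℤ) (n : ℤ) :
    (HH n).obj (Q.obj K) ≃ₗ[S] K.homology n :=
  ((homologyFunctorFactors (ModuleCat.{u} S) n).app K).toLinearEquiv

lemma hEquiv_map {K L : CochainComplex (ModuleCat.{u} S) ℤ} (φ : K ⟶ L) (n : ℤ) (x : (HH n).obj (Q.obj K)) :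
    hEquiv L n ((HH n).map (Q.map φ) x) = HomologicalComplex.homologyMap φ n (hEquiv K n x) :=
  ConcreteCategory.congr_hom ((homologyFunctorFactors (ModuleCat.{u} S) n).hom.naturality φ) x

lemma exists_coprod {ι : Type u} (X : ι → DerivedCategory (ModuleCat.{u} S)) :
    ∃ (c : Cofan X) (hc : IsColimit c), ∀ n (x : (HH n).obj c.pt), ∃ s : Finset ι,
      x = ∑ i ∈ s, (HH n).map (c.inj i) ((HH n).map (cproj hc i) x) := by
  let K : ι → CochainComplex (ModuleCat.{u} S) ℤ := fun i => Q.objPreimage (X i)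
  let e : ∀ i, Q.obj (K i) ≅ X i := fun i => Q.objObjPreimageIso (X i)
  let k : Cofan K := Cofan.mk (∐ K) (Sigma.ι K)
  have hk : IsColimit k := coproductIsCoproduct K
  obtain ⟨hQ⟩ := QCofanIsColimit hk
  let c : Cofan X := Cofan.mk (Q.obj k.pt) (fun i => (e i).inv ≫ Q.map (k.inj i))
  have hc : IsColimit c := by
    refine Cofan.IsColimit.mk _ (fun s => Cofan.IsColimit.desc hQ (fun i => (e i).hom ≫ s.inj i)) (fun s i => ?_) (fun s m hm => ?_)
    · have := Cofan.IsColimit.fac hQ (fun i => (e i).hom ≫ s.inj i) i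
      change ((e i).inv ≫ (QCofan k).inj i) ≫ _ = _
      rw [Category.assoc, this]; simp
    · refine Cofan.IsColimit.hom_ext hQ _ _ (fun i => ?_)
      rw [Cofan.IsColimit.fac, ← hm i]
      change Q.map (k.inj i) ≫ m = (e i).hom ≫ ((e i).inv ≫ Q.map (k.inj i)) ≫ m
      simp
  have hp : ∀ i, cproj hc i = Q.map (cproj hk i) ≫ (e i).hom := by
    intro i
    refine Cofan.IsColimit.hom_ext hc _ _ (fun j => ?_)
    change _ = ((e j).inv ≫ Q.map (k.inj j)) ≫ Q.map (cproj hk i) ≫ (e i).hom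
    by_cases h : j = i
    · subst h
      rw [inj_cproj_self, Category.assoc, ← Q.map_comp_assoc, inj_cproj_self]; simp
    · rw [inj_cproj_ne hc h, Category.assoc, ← Q.map_comp_assoc, inj_cproj_ne hk h]; simp
  refine ⟨c, hc, fun n x => ?_⟩
  obtain ⟨s, hs⟩ := homology_finite hk n (hEquiv k.pt n x)
  refine ⟨s, ?_⟩
  apply (hEquiv k.pt n).injective
  rw [hs]
  refine Eq.trans ?_ (map_sum (hEquiv k.pt n) _ _).symm
  refine Finset.sum_congr rfl (fun i _ => ?_)
  have key : cproj hc i ≫ c.inj i = Q.map (cproj hk i) ≫ Q.map (k.inj i) := by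
    rw [hp]
    change (Q.map (cproj hk i) ≫ (e i).hom) ≫ (e i).inv ≫ Q.map (k.inj i) = _
    simp
  have key2 : (HH n).map (c.inj i) ((HH n).map (cproj hc i) x) =
      (HH n).map (Q.map (k.inj i)) ((HH n).map (Q.map (cproj hk i)) x) := by
    have := ConcreteCategory.congr_hom (congrArg (fun q => (HH n).map q) key) x
    rw [Functor.map_comp, Functor.map_comp] at this
    exact this
  rw [key2, hEquiv_map, hEquiv_map]

end Qcoprod

section Generation
variable {S : Type u} [CommRing S] [HasDerivedCategory.{w'} (ModuleCat.{u} S)]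
open DerivedCategory

noncomputable def hm {X Y : DerivedCategory (ModuleCat.{u} S)} (f : X ⟶ Y) (n : ℤ) :
    (HH n).obj X →ₗ[S] (HH n).obj Y := ((HH n).map f).hom

lemma hm_def {X Y : DerivedCategory (ModuleCat.{u} S)} (f : X ⟶ Y) (n : ℤ) (x : (HH n).obj X) :
    (HH n).map f x = hm f n x := rfl

lemma hm_comp {X Y Z : DerivedCategory (ModuleCat.{u} S)} (f : X ⟶ Y) (g : Y ⟶ Z) (n : ℤ) (x) :
    hm (f ≫ g) n x = hm g n (hm f n x) := by
  simp [hm]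

lemma hm_id (X : DerivedCategory (ModuleCat.{u} S)) (n : ℤ) (x) :
    hm (𝟙 X) n x = x := by
  simp [hm]

lemma hm_zero (X Y : DerivedCategory (ModuleCat.{u} S)) (n : ℤ) (x) :
    hm (0 : X ⟶ Y) n x = 0 := by
  simp [hm]

lemma hm_sub {X Y : DerivedCategory (ModuleCat.{u} S)} (f g : X ⟶ Y) (n : ℤ) (x) :
    hm (f - g) n x = hm f n x - hm g n x := by
  simp [hm, Functor.map_sub]

lemma hm_hEquiv {K L : CochainComplex (ModuleCat.{u} S) ℤ} (φ : K ⟶ L) (n : ℤ) (x : (HH n).obj (Q.obj K)) :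
    hEquiv L n (hm (Q.map φ) n x) = HomologicalComplex.homologyMap φ n (hEquiv K n x) :=
  hEquiv_map φ n x

lemma isIso_of_hm {X Y : DerivedCategory (ModuleCat.{u} S)} (f : X ⟶ Y)
    (h : ∀ n, Function.Bijective (hm f n)) : IsIso f := by
  rw [isIso_iff]
  intro n
  exact (ConcreteCategory.isIso_iff_bijective _).2 (h n)

lemma hm_bijective {X Y : DerivedCategory (ModuleCat.{u} S)} (f : X ⟶ Y) [IsIso f] (n : ℤ) :
    Function.Bijective (hm f n) :=
  (ConcreteCategory.isIso_iff_bijective ((HH n).map f)).1 inferInstance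

lemma hm_exact {X Y Z : DerivedCategory (ModuleCat.{u} S)} {f : X ⟶ Y} {g : Y ⟶ Z} {h : Z ⟶ X⟦(1 : ℤ)⟧}
    (hT : Triangle.mk f g h ∈ distTriang _) (n : ℤ) (y) (hy : hm g n y = 0) : ∃ x, hm f n x = y :=
  (ShortComplex.moduleCat_exact_iff _).1 (HomologySequence.exact₂ _ hT n) y hy

lemma hm_surj_of_inj {X Y Z : DerivedCategory (ModuleCat.{u} S)} {f : X ⟶ Y} {g : Y ⟶ Z} {h : Z ⟶ X⟦(1 : ℤ)⟧}
    (hT : Triangle.mk f g h ∈ distTriang _) (n : ℤ) (hf : Function.Injective (hm f (n+1))) :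
    Function.Surjective (hm g n) := by
  have hmono := (ModuleCat.mono_iff_injective ((HH (n+1)).map f)).2 hf
  have h0 := (HomologySequence.mono_homologyMap_mor₁_iff _ hT n (n+1)).1 hmono
  exact (ModuleCat.epi_iff_surjective _).1 ((HomologySequence.epi_homologyMap_mor₂_iff _ hT n (n+1)).2 h0)

lemma hm_bij_of_zero {X Y Z : DerivedCategory (ModuleCat.{u} S)} {f : X ⟶ Y} {g : Y ⟶ Z} {h : Z ⟶ X⟦(1 : ℤ)⟧}
    (hT : Triangle.mk f g h ∈ distTriang _) (hZ : ∀ n (z : (HH n).obj Z), z = 0) (n : ℤ) :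
    Function.Bijective (hm f n) := by
  refine ⟨?_, fun y => hm_exact hT n y (hZ _ _)⟩
  have h0 : HomologySequence.δ (Triangle.mk f g h) (n-1) n = 0 := by
    ext z
    have : z = 0 := hZ _ z
    rw [this, map_zero, map_zero]
  exact (ModuleCat.mono_iff_injective _).1 ((HomologySequence.mono_homologyMap_mor₁_iff _ hT (n-1) n).2 h0)

variable (S) in
noncomputable def GG (n : ℤ) : DerivedCategory (ModuleCat.{u} S) :=
  (singleFunctor (ModuleCat.{u} S) n).obj (ModuleCat.of S S)

noncomputable def shiftSmodIso (M : ModuleCat.{u} S) (n : ℤ) :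
    (smod S M)⟦n⟧ ≅ (singleFunctor (ModuleCat.{u} S) (-n)).obj M :=
  ((singleFunctors (ModuleCat.{u} S)).shiftIso n (-n) 0 (by simp)).app M

lemma GG_mem {L : Set (DerivedCategory (ModuleCat.{u} S))} (hL : IsLocalizingSub.{u} L)
    (h : smod S (ModuleCat.of S S) ∈ L) (n : ℤ) : GG S n ∈ L := by
  obtain ⟨m, rfl⟩ : ∃ m, n = -m := ⟨-n, by simp⟩
  exact hL.mem_of_iso (shiftSmodIso _ m) (hL.shift_mem m h)

lemma GG_hits (E : DerivedCategory (ModuleCat.{u} S)) (n : ℤ) (x : (HH n).obj E) :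
    ∃ (g : GG S n ⟶ E) (y : (HH n).obj (GG S n)), hm g n y = x := by
  obtain ⟨K, ⟨e⟩⟩ : ∃ K, Nonempty (Q.obj K ≅ E) := ⟨_, ⟨Q.objObjPreimageIso E⟩⟩
  obtain ⟨z, hz⟩ := HRep.exists_rep K n (hEquiv K n (hm e.inv n x))
  let φ : (HomologicalComplex.single (ModuleCat.{u} S) (ComplexShape.up ℤ) n).obj (ModuleCat.of S S) ⟶ K :=
    HomologicalComplex.mkHomFromSingle (ModuleCat.ofHom (LinearMap.toSpanSingleton S _ z)) (fun m _ => by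
      ext
      have := hz.d_eq_zero m
      simpa using this)
  let G' := (HomologicalComplex.single (ModuleCat.{u} S) (ComplexShape.up ℤ) n).obj (ModuleCat.of S S)
  let o : G'.X n := (HomologicalComplex.singleObjXSelf (ComplexShape.up ℤ) n (ModuleCat.of S S)).inv (1 : S)
  have ho : φ.f n o = z := by
    rw [HomologicalComplex.mkHomFromSingle_f]
    simp [o]
  obtain ⟨y, hy⟩ := HRep.exists_class (K := G') (n := n) (z := o) (by
    rw [HomologicalComplex.single_obj_d]; rfl)
  let i : GG S n ≅ Q.obj G' := (singleFunctorIsoCompQ (ModuleCat.{u} S) n).app (ModuleCat.of S S)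
  refine ⟨i.hom ≫ Q.map φ ≫ e.hom, hm i.inv n ((hEquiv G' n).symm y), ?_⟩
  rw [← hm_comp, i.inv_hom_id_assoc, hm_comp]
  have h2 : hm (Q.map φ) n ((hEquiv G' n).symm y) = hm e.inv n x := by
    apply (hEquiv K n).injective
    rw [hm_hEquiv, LinearEquiv.apply_symm_apply]
    have := hy.map φ
    rw [ho] at this
    exact this.unique hz
  rw [h2, ← hm_comp, e.inv_hom_id, hm_id]

lemma exists_surj {L : Set (DerivedCategory (ModuleCat.{u} S))} (hL : IsLocalizingSub.{u} L)
    (h : smod S (ModuleCat.of S S) ∈ L) (E : DerivedCategory (ModuleCat.{u} S)) :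
    ∃ P ∈ L, ∃ p : P ⟶ E, ∀ n, Function.Surjective (hm p n) := by
  choose g y hg using GG_hits E
  obtain ⟨c, hc, -⟩ := exists_coprod (fun i : (Σ n, (HH n).obj E) => GG S i.1)
  refine ⟨c.pt, hL.coprod_mem _ c hc (fun i => GG_mem hL h _), 
    Cofan.IsColimit.desc hc (fun i => g i.1 i.2), fun n x => ⟨hm (c.inj ⟨n, x⟩) n (y n x), ?_⟩⟩
  rw [← hm_comp, Cofan.IsColimit.fac, hg]

lemma exists_step {L : Set (DerivedCategory (ModuleCat.{u} S))} (hL : IsLocalizingSub.{u} L)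
    (h : smod S (ModuleCat.of S S) ∈ L) (E : DerivedCategory (ModuleCat.{u} S)) 
    (X : DerivedCategory (ModuleCat.{u} S)) (hX : X ∈ L) (p : X ⟶ E) :
    ∃ (X' : DerivedCategory (ModuleCat.{u} S)) (_ : X' ∈ L) (p' : X' ⟶ E) (j : X ⟶ X'), j ≫ p' = p ∧
      ∀ n x, hm p n x = 0 → hm j n x = 0 := by
  obtain ⟨F, i, k, hT⟩ := distinguished_cocone_triangle₁ p
  obtain ⟨P, hP, π, hπ⟩ := exists_surj hL h F
  obtain ⟨X', j, l, hT'⟩ := distinguished_cocone_triangle (π ≫ i)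
  have hip : i ≫ p = 0 := comp_distTriang_mor_zero₁₂ _ hT
  have hij : (π ≫ i) ≫ j = 0 := comp_distTriang_mor_zero₁₂ _ hT'
  obtain ⟨p', hp'⟩ := Triangle.yoneda_exact₂ _ hT' p (show (π ≫ i) ≫ p = 0 by
    rw [Category.assoc, hip, comp_zero])
  refine ⟨X', hL.cone_mem _ hT' hP hX, p', j, hp'.symm, fun n x hx => ?_⟩
  obtain ⟨y, rfl⟩ := hm_exact hT n x hx
  obtain ⟨t, rfl⟩ := hπ n y
  rw [← hm_comp, ← hm_comp, ← Category.assoc, hij, hm_zero]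

lemma hocolim_mem {L : Set (DerivedCategory (ModuleCat.{u} S))} (hL : IsLocalizingSub.{u} L)
    (E : DerivedCategory (ModuleCat.{u} S)) 
    (X : ℕ → DerivedCategory (ModuleCat.{u} S)) (hX : ∀ i, X i ∈ L) (p : ∀ i, X i ⟶ E)
    (t : ∀ i, X i ⟶ X (i+1)) (htp : ∀ i, t i ≫ p (i+1) = p i)
    (hp0 : ∀ n, Function.Surjective (hm (p 0) n))
    (hk : ∀ i n x, hm (p i) n x = 0 → hm (t i) n x = 0) : E ∈ L := by
  obtain ⟨c, hc, hfin⟩ := exists_coprod (fun i : ULift.{u} ℕ => X i.down)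
  let ι : ∀ i : ℕ, X i ⟶ c.pt := fun i => c.inj ⟨i⟩
  let π : ∀ i : ℕ, c.pt ⟶ X i := fun i => cproj hc ⟨i⟩
  let s : c.pt ⟶ c.pt := Cofan.IsColimit.desc hc (fun i => t i.down ≫ ι (i.down+1))
  have hιs : ∀ i, ι i ≫ s = t i ≫ ι (i+1) := fun i => Cofan.IsColimit.fac hc _ ⟨i⟩
  let q0 : c.pt ⟶ E := Cofan.IsColimit.desc hc (fun i => p i.down)
  have hιq : ∀ i, ι i ≫ q0 = p i := fun i => Cofan.IsColimit.fac hc _ ⟨i⟩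
  have ext : ∀ {Z : DerivedCategory (ModuleCat.{u} S)} (a b : c.pt ⟶ Z), (∀ i, ι i ≫ a = ι i ≫ b) → a = b :=
    fun a b h => Cofan.IsColimit.hom_ext hc _ _ (fun i => h i.down)
  have hιπ : ∀ i, ι i ≫ π i = 𝟙 _ := fun i => inj_cproj_self hc ⟨i⟩
  have hιπ' : ∀ i j, j ≠ i → ι j ≫ π i = 0 := fun i j h => inj_cproj_ne hc (i := ⟨i⟩) (j := ⟨j⟩) (fun h' => h (congrArg ULift.down h'))
  have hs0 : s ≫ π 0 = 0 := ext _ _ (fun i => by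
    rw [← Category.assoc, hιs, Category.assoc, hιπ' 0 (i+1) (by lia), comp_zero, comp_zero])
  have hs1 : ∀ j, s ≫ π (j+1) = π j ≫ t j := fun j => ext _ _ (fun i => by
    rw [← Category.assoc, hιs, Category.assoc]
    by_cases h : i = j
    · subst h
      rw [hιπ, ← Category.assoc, hιπ, Category.id_comp, Category.comp_id]
    · rw [hιπ' _ _ (by lia), ← Category.assoc, hιπ' _ _ h, comp_zero, zero_comp])
  obtain ⟨H, r, l, hT⟩ := distinguished_cocone_triangle (𝟙 c.pt - s)
  have hsq : s ≫ q0 = q0 := ext _ _ (fun i => by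
    rw [← Category.assoc, hιs, Category.assoc, hιq, hιq, htp])
  have hsr : s ≫ r = r := by
    have h0 : (𝟙 c.pt - s) ≫ r = 0 := comp_distTriang_mor_zero₁₂ _ hT
    rw [Preadditive.sub_comp, Category.id_comp] at h0
    exact (sub_eq_zero.1 h0).symm
  obtain ⟨q, hq⟩ : ∃ q : H ⟶ E, q0 = r ≫ q :=
    Triangle.yoneda_exact₂ _ hT q0 (show (𝟙 c.pt - s) ≫ q0 = 0 by
      rw [Preadditive.sub_comp, Category.id_comp, hsq, sub_self])
  have hH : H ∈ L := hL.cone_mem _ hT (hL.coprod_mem _ c hc (fun i => hX _)) (hL.coprod_mem _ c hc (fun i => hX _))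
  have hinj : ∀ n, Function.Injective (hm (𝟙 c.pt - s) n) := by
    intro n
    rw [injective_iff_map_eq_zero]
    intro x hx
    rw [hm_sub, hm_id, sub_eq_zero] at hx
    have h0 : ∀ i, hm (π i) n x = 0 := by
      intro i
      induction i with
      | zero => rw [hx, ← hm_comp, hs0, hm_zero]
      | succ i ih => rw [hx, ← hm_comp, hs1, hm_comp, ih, map_zero]
    obtain ⟨F, hF⟩ := hfin n x
    rw [hF]
    refine Finset.sum_eq_zero (fun i _ => ?_)
    have := h0 i.down
    change hm (c.inj i) n (hm (π i.down) n x) = 0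
    rw [this, map_zero]
  have hιr : ∀ i, t i ≫ ι (i+1) ≫ r = ι i ≫ r := fun i => by
    rw [← Category.assoc, ← hιs, Category.assoc, hsr]
  have hup : ∀ n i k (w : (HH n).obj (X i)), ∃ w', hm (ι (i+k) ≫ r) n w' = hm (ι i ≫ r) n w := by
    intro n i k w
    induction k with
    | zero => exact ⟨w, rfl⟩
    | succ k ih =>
      obtain ⟨w', hw'⟩ := ih
      exact ⟨hm (t (i+k)) n w', by rw [← hw', ← hιr (i+k), hm_comp (t (i+k))]; rfl⟩
  have hup' : ∀ n i j (w : (HH n).obj (X i)), i ≤ j → ∃ w', hm (ι j ≫ r) n w' = hm (ι i ≫ r) n w := by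
    intro n i j w hij
    obtain ⟨k, rfl⟩ := Nat.exists_eq_add_of_le hij
    exact hup n i k w
  have hall : ∀ n (y : (HH n).obj H), ∃ i w, hm (ι i ≫ r) n w = y := by
    intro n y
    obtain ⟨x, rfl⟩ := hm_surj_of_inj hT n (hinj _) y
    obtain ⟨F, hF⟩ := hfin n x
    rw [hF, map_sum]
    classical
    clear hF
    induction F using Finset.induction_on with
    | empty => exact ⟨0, 0, by simp⟩
    | insert a F ha ih =>
      obtain ⟨i, w, hw⟩ := ih
      rw [Finset.sum_insert ha, ← hw]
      obtain ⟨w1, h1⟩ := hup' n i (max i a.down) w (le_max_left _ _)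
      obtain ⟨w2, h2⟩ := hup' n a.down (max i a.down) (hm (π a.down) n x) (le_max_right _ _)
      refine ⟨max i a.down, w2 + w1, ?_⟩
      rw [map_add, h1, h2, hm_comp (ι a.down)]
      rfl
  have : IsIso q := isIso_of_hm q (fun n => by
    constructor
    · rw [injective_iff_map_eq_zero]
      intro y hy
      obtain ⟨i, w, rfl⟩ := hall n y
      rw [← hm_comp, Category.assoc, ← hq, hιq] at hy
      rw [← hιr, hm_comp, hk i n w hy, map_zero]
    · intro y
      obtain ⟨x, rfl⟩ := hp0 n y
      exact ⟨hm (ι 0 ≫ r) n x, by rw [← hm_comp, Category.assoc, ← hq, hιq]⟩)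
  exact hL.mem_of_iso (asIso q) hH

theorem mem_of_generator {L : Set (DerivedCategory (ModuleCat.{u} S))} (hL : IsLocalizingSub.{u} L)
    (h : smod S (ModuleCat.of S S) ∈ L) (E : DerivedCategory (ModuleCat.{u} S)) : E ∈ L := by
  obtain ⟨P, hP, p, hp⟩ := exists_surj hL h E
  choose X' hX' p' j hj hk using exists_step hL h E
  let st : ℕ → (Σ' (X : DerivedCategory (ModuleCat.{u} S)) (_ : X ∈ L), X ⟶ E) := fun n =>
    Nat.rec ⟨P, hP, p⟩ (fun _ s => ⟨X' s.1 s.2.1 s.2.2, hX' s.1 s.2.1 s.2.2, p' s.1 s.2.1 s.2.2⟩) n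
  exact hocolim_mem hL E (fun i => (st i).1) (fun i => (st i).2.1) (fun i => (st i).2.2)
    (fun i => j (st i).1 (st i).2.1 (st i).2.2) (fun i => hj _ _ _) hp (fun i => hk _ _ _)

end Generation

section Restriction
open DerivedCategory

variable {R S : Type u} [CommRing R] [CommRing S] (φ : R →+* S)
  [HasDerivedCategory.{w'} (ModuleCat.{u} R)]

lemma cofan_pt_iso {T : Type v} [Category.{w} T] {ι : Type u} {X Y : ι → T} {c : Cofan X} (hc : IsColimit c)
    {d : Cofan Y} (hd : IsColimit d) (e : ∀ i, X i ≅ Y i) : Nonempty (c.pt ≅ d.pt) :=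
  ⟨{ hom := Cofan.IsColimit.desc hc (fun i => (e i).hom ≫ d.inj i)
     inv := Cofan.IsColimit.desc hd (fun i => (e i).inv ≫ c.inj i)
     hom_inv_id := Cofan.IsColimit.hom_ext hc _ _ (fun i => by simp)
     inv_hom_id := Cofan.IsColimit.hom_ext hd _ _ (fun i => by simp) }⟩

lemma restrict_aux [HasDerivedCategory.{w} (ModuleCat.{u} S)]
    [PreservesFiniteLimits (ModuleCat.restrictScalars.{u} φ)]
    [PreservesFiniteColimits (ModuleCat.restrictScalars.{u} φ)]
    {L : Set (DerivedCategory (ModuleCat.{u} R))} (hL : IsLocalizingSub.{u} L) :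
    IsLocalizingSub.{u} {X | (ModuleCat.restrictScalars.{u} φ).mapDerivedCategory.obj X ∈ L} where
  zero_mem := hL.mem_of_iso ((ModuleCat.restrictScalars.{u} φ).mapDerivedCategory.mapZeroObject).symm hL.zero_mem
  mem_of_iso e h := hL.mem_of_iso ((ModuleCat.restrictScalars.{u} φ).mapDerivedCategory.mapIso e) h
  shift_mem n x h := hL.mem_of_iso
    (((ModuleCat.restrictScalars.{u} φ).mapDerivedCategory.commShiftIso n).app x).symm (hL.shift_mem n h)
  cone_mem Tr hT h1 h2 := hL.cone_mem _ ((ModuleCat.restrictScalars.{u} φ).mapDerivedCategory.map_distinguished _ hT) h1 h2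
  coprod_mem := by
    intro ι X c hc hX
    let F := (ModuleCat.restrictScalars.{u} φ).mapDerivedCategory
    let FC := (ModuleCat.restrictScalars.{u} φ).mapHomologicalComplex (ComplexShape.up ℤ)
    let FF := (ModuleCat.restrictScalars.{u} φ).mapDerivedCategoryFactors
    let K : ι → CochainComplex (ModuleCat.{u} S) ℤ := fun i => Q.objPreimage (X i)
    let e : ∀ i, Q.obj (K i) ≅ X i := fun i => Q.objObjPreimageIso (X i)
    let k : Cofan K := Cofan.mk (∐ K) (Sigma.ι K)
    have hk : IsColimit k := coproductIsCoproduct K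
    obtain ⟨hQ⟩ := QCofanIsColimit hk
    let k' : Cofan (fun i => FC.obj (K i)) := Cofan.mk (FC.obj k.pt) (fun i => FC.map (k.inj i))
    have hk' : IsColimit k' := isColimitCofanMkObjOfIsColimit FC K (fun i => k.inj i)
      (hk.ofIsoColimit (Cofan.ext (Iso.refl _) (by simp)))
    obtain ⟨hQ'⟩ := QCofanIsColimit hk'
    have h1 : Q.obj (FC.obj k.pt) ∈ L := hL.coprod_mem _ _ hQ' (fun i =>
      hL.mem_of_iso (((F.mapIso (e i)).symm ≪≫ FF.app (K i))) (hX i))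
    obtain ⟨iso⟩ : Nonempty (c.pt ≅ Q.obj k.pt) := cofan_pt_iso hc hQ (fun i => (e i).symm)
    exact hL.mem_of_iso ((FF.app k.pt).symm ≪≫ (F.mapIso iso).symm) h1

theorem restrict_mem {L : Set (DerivedCategory (ModuleCat.{u} R))} (hL : IsLocalizingSub.{u} L)
    (h : smod R ((ModuleCat.restrictScalars.{u} φ).obj (ModuleCat.of S S)) ∈ L) 
    (N : CochainComplex (ModuleCat.{u} S) ℤ) :
    Q.obj (((ModuleCat.restrictScalars.{u} φ).mapHomologicalComplex (ComplexShape.up ℤ)).obj N) ∈ L := by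
  let _ : HasDerivedCategory.{u+1} (ModuleCat.{u} S) := HasDerivedCategory.standard _
  have : PreservesLimitsOfSize.{0, 0} (ModuleCat.restrictScalars.{u} φ) :=
    (ModuleCat.extendRestrictScalarsAdj.{u} φ).rightAdjoint_preservesLimits
  have : PreservesFiniteLimits (ModuleCat.restrictScalars.{u} φ) := inferInstance
  have : PreservesFiniteColimits (ModuleCat.restrictScalars.{u} φ) := inferInstance
  have := mem_of_generator (restrict_aux φ hL)
    (hL.mem_of_iso (((ModuleCat.restrictScalars.{u} φ).mapDerivedCategorySingleFunctor 0).app (ModuleCat.of S S)).symm h) (Q.obj N)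
  exact hL.mem_of_iso ((ModuleCat.restrictScalars.{u} φ).mapDerivedCategoryFactors.app N) this

theorem restrict_mem_single {L : Set (DerivedCategory (ModuleCat.{u} R))} (hL : IsLocalizingSub.{u} L)
    (h : smod R ((ModuleCat.restrictScalars.{u} φ).obj (ModuleCat.of S S)) ∈ L) 
    (M : ModuleCat.{u} S) :
    smod R ((ModuleCat.restrictScalars.{u} φ).obj M) ∈ L := by
  let _ : HasDerivedCategory.{u+1} (ModuleCat.{u} S) := HasDerivedCategory.standard _
  have : PreservesLimitsOfSize.{0, 0} (ModuleCat.restrictScalars.{u} φ) :=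
    (ModuleCat.extendRestrictScalarsAdj.{u} φ).rightAdjoint_preservesLimits
  have : PreservesFiniteLimits (ModuleCat.restrictScalars.{u} φ) := inferInstance
  have : PreservesFiniteColimits (ModuleCat.restrictScalars.{u} φ) := inferInstance
  have := mem_of_generator (restrict_aux φ hL)
    (hL.mem_of_iso (((ModuleCat.restrictScalars.{u} φ).mapDerivedCategorySingleFunctor 0).app (ModuleCat.of S S)).symm h) (smod S M)
  exact hL.mem_of_iso (((ModuleCat.restrictScalars.{u} φ).mapDerivedCategorySingleFunctor 0).app M) this

end Restriction

section LocBasics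
variable {T : Type u} [Category.{v} T] [HasZeroObject T] [HasShift T ℤ] [Preadditive T]
  [∀ n : ℤ, (shiftFunctor T n).Additive] [Pretriangulated T]

lemma loc_isLocalizing (S : Set T) : IsLocalizingSub.{w} (Loc.{w} S) where
  zero_mem := fun L hL => hL.1.zero_mem
  mem_of_iso := fun e h L hL => hL.1.mem_of_iso e (h L hL)
  shift_mem := fun n _ h L hL => hL.1.shift_mem n (h L hL)
  cone_mem := fun Tr hT h1 h2 L hL => hL.1.cone_mem Tr hT (h1 L hL) (h2 L hL)
  coprod_mem := fun f c hc h L hL => hL.1.coprod_mem f c hc (fun i => h i L hL)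

lemma subset_loc (S : Set T) : S ⊆ Loc.{w} S := fun _ hx _ hL => hL.2 hx

lemma loc_subset {S L : Set T} (hL : IsLocalizingSub.{w} L) (h : S ⊆ L) : Loc.{w} S ⊆ L :=
  fun _ hx => hx L ⟨hL, h⟩

/-- objects with no maps to any shift of `E` -/
def ZZ (E : T) : Set T := {c | ∀ (n : ℤ) (g : c ⟶ E⟦n⟧), g = 0}

set_option linter.unusedSectionVars false in
lemma ZZ_shift (E : T) {x : T} (m : ℤ) (h : x ∈ ZZ E) : x⟦m⟧ ∈ ZZ E := by
  intro n g
  let e : (E⟦n⟧)⟦-m⟧ ≅ E⟦n + -m⟧ := ((shiftFunctorAdd T n (-m)).app E).symm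
  let e' : (x⟦m⟧)⟦-m⟧ ≅ x := shiftShiftNeg x m
  have h0 := h _ (e'.inv ≫ g⟦-m⟧' ≫ e.hom)
  have h1 : g⟦-m⟧' = 0 := by
    have := congrArg (fun t => e'.hom ≫ t ≫ e.inv) h0
    simpa using this
  apply (shiftFunctor T (-m)).map_injective
  rw [h1, Functor.map_zero]

lemma ZZ_isLocalizing (E : T) : IsLocalizingSub.{w} (ZZ E) where
  zero_mem := fun n g => (isZero_zero T).eq_of_src _ _
  mem_of_iso := fun e h n g => by
    have := h n (e.hom ≫ g)
    rw [← e.inv_hom_id_assoc g, this, comp_zero]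
  shift_mem := fun n _ h => ZZ_shift E n h
  cone_mem := fun Tr hT h1 h2 n g => by
    obtain ⟨h, hh⟩ : ∃ h : Tr.obj₁⟦(1 : ℤ)⟧ ⟶ E⟦n⟧, g = Tr.mor₃ ≫ h := Triangle.yoneda_exact₃ _ hT g (h2 n _)
    rw [hh, ZZ_shift E 1 h1 n h, comp_zero]
  coprod_mem := fun f c hc h n g => Cofan.IsColimit.hom_ext hc _ _ (fun i => by
    rw [comp_zero]; exact h i n _)

end LocBasics

section Iso
variable {R : Type u} [CommRing R] [HasDerivedCategory.{w'} (ModuleCat.{u} R)]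
open DerivedCategory

lemma hm_smul (f : R) (E : DerivedCategory (ModuleCat.{u} R)) (n : ℤ) (x : (HH n).obj E) :
    hm (f • 𝟙 E) n x = f • x := by
  obtain ⟨K, ⟨e⟩⟩ : ∃ K, Nonempty (Q.obj K ≅ E) := ⟨_, ⟨Q.objObjPreimageIso E⟩⟩
  have h0 : f • 𝟙 E = e.inv ≫ Q.map (f • 𝟙 K) ≫ e.hom := by
    rw [Functor.map_smul, Q.map_id, Linear.smul_comp, Linear.comp_smul, Category.id_comp, e.inv_hom_id]
  have h1 : ∀ y, hm (Q.map (f • 𝟙 K)) n y = f • y := by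
    intro y
    apply (hEquiv K n).injective
    rw [hm_hEquiv, map_smul]
    obtain ⟨z, hz⟩ := HRep.exists_rep K n (hEquiv K n y)
    have a1 := hz.map (f • 𝟙 K)
    exact a1.unique (hz.smul f)
  rw [h0, hm_comp, hm_comp, h1, map_smul, ← hm_comp, e.inv_hom_id, hm_id]

lemma isIso_smul_iff (f : R) (E : DerivedCategory (ModuleCat.{u} R)) :
    IsIso (f • 𝟙 E) ↔ ∀ n, Function.Bijective (fun m : (HH n).obj E => f • m) := by
  have h : ∀ n, (hm (f • 𝟙 E) n : (HH n).obj E → (HH n).obj E) = (fun m : (HH n).obj E => f • m) :=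
    fun n => funext (hm_smul f E n)
  constructor
  · intro _ n
    rw [← h]
    exact hm_bijective _ n
  · intro h'
    exact isIso_of_hm _ (fun n => by rw [h]; exact h' n)

lemma smul_isLocalizing (f : R) :
    IsLocalizingSub.{u} {E : DerivedCategory (ModuleCat.{u} R) | IsIso (f • 𝟙 E)} where
  zero_mem := ⟨0, (isZero_zero _).eq_of_src _ _, (isZero_zero _).eq_of_src _ _⟩
  mem_of_iso := fun {x y} e h => by
    have h : IsIso (f • 𝟙 x) := h
    have : f • 𝟙 y = e.inv ≫ (f • 𝟙 x) ≫ e.hom := by simp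
    show IsIso (f • 𝟙 y)
    rw [this]; infer_instance
  shift_mem := fun n x h => by
    have h : IsIso (f • 𝟙 x) := h
    have : f • 𝟙 (x⟦n⟧) = (f • 𝟙 x)⟦n⟧' := by rw [Functor.map_smul, CategoryTheory.Functor.map_id]
    show IsIso (f • 𝟙 (x⟦n⟧))
    rw [this]; infer_instance
  cone_mem := fun Tr hT h1 h2 => by
    let φ : Tr ⟶ Tr := 
      { hom₁ := f • 𝟙 _
        hom₂ := f • 𝟙 _
        hom₃ := f • 𝟙 _
        comm₁ := by simp
        comm₂ := by simp
        comm₃ := by simp [Functor.map_smul] }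
    exact isIso₃_of_isIso₁₂ φ hT hT h1 h2
  coprod_mem := fun X c hc h => by
    have h : ∀ i, IsIso (f • 𝟙 (X i)) := h
    have key : ∀ i, inv (f • 𝟙 (X i)) ≫ (f • c.inj i) = c.inj i := fun i => by
      rw [IsIso.inv_comp_eq]; simp
    refine ⟨Cofan.IsColimit.desc hc (fun i => inv (f • 𝟙 (X i)) ≫ c.inj i), ?_, ?_⟩
    · refine Cofan.IsColimit.hom_ext hc _ _ (fun i => ?_)
      rw [Linear.smul_comp, Linear.comp_smul, Category.id_comp, Cofan.IsColimit.fac, Category.comp_id, ← Linear.comp_smul, key]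
    · refine Cofan.IsColimit.hom_ext hc _ _ (fun i => ?_)
      rw [Linear.comp_smul, Category.comp_id, Linear.comp_smul, Cofan.IsColimit.fac, Category.comp_id, ← Linear.comp_smul, key]

lemma smod_smul (f : R) (M : ModuleCat.{u} R) :
    f • 𝟙 (smod R M) = (show smod R M ⟶ smod R M from (singleFunctor (ModuleCat.{u} R) 0).map (f • 𝟙 M)) := by
  show f • 𝟙 ((singleFunctor (ModuleCat.{u} R) 0).obj M) = (singleFunctor (ModuleCat.{u} R) 0).map (f • 𝟙 M)
  rw [Functor.map_smul, CategoryTheory.Functor.map_id]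

lemma smod_smul_isIso (f : R) (M : ModuleCat.{u} R) (h : IsIso (f • 𝟙 M)) : IsIso (f • 𝟙 (smod R M)) := by
  rw [smod_smul]
  exact inferInstanceAs (IsIso ((singleFunctor (ModuleCat.{u} R) 0).map (f • 𝟙 M)))

lemma smod_smul_zero (f : R) (M : ModuleCat.{u} R) (h : f • 𝟙 M = 0) : f • 𝟙 (smod R M) = 0 := by
  rw [smod_smul, h]
  exact (singleFunctor (ModuleCat.{u} R) 0).map_zero _ _

lemma smod_loc_mem (f : R) : IsIso (f • 𝟙 (smod R (ModuleCat.of R (Localization.Away f)))) := by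
  apply smod_smul_isIso
  rw [ConcreteCategory.isIso_iff_bijective]
  have hu : IsUnit (algebraMap R (Localization.Away f) f) := IsLocalization.Away.algebraMap_isUnit f
  have : Function.Bijective (fun x : Localization.Away f => f • x) := by
    simp only [Algebra.smul_def]
    exact IsUnit.isUnit_iff_mulLeft_bijective.1 hu
  exact this

lemma part2_mp (f : R) (E : DerivedCategory (ModuleCat.{u} R)) 
    (h : E ∈ Loc.{u} {smod R (ModuleCat.of R (Localization.Away f))}) : IsIso (f • 𝟙 E) :=
  loc_subset (smul_isLocalizing f) (by rintro _ rfl; exact smod_loc_mem f) h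

lemma part1_mpr (f : R) (E : DerivedCategory (ModuleCat.{u} R)) (h : IsIso (f • 𝟙 E)) :
    E ∈ rightOrth (Loc.{u} {smod R (ModuleCat.of R (R ⧸ Ideal.span {f}))}) := by
  intro c hc g
  have hc' : c ∈ ZZ E := by
    refine loc_subset (ZZ_isLocalizing E) ?_ hc
    rintro _ rfl n g
    have hi : IsIso (f • 𝟙 (E⟦n⟧)) := (smul_isLocalizing f).shift_mem n h
    have h0 : f • 𝟙 (smod R (ModuleCat.of R (R ⧸ Ideal.span {f}))) = 0 := by
      apply smod_smul_zero
      ext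
      show f • (1 : R ⧸ Ideal.span {f}) = 0
      rw [Algebra.smul_def, mul_one]
      exact Ideal.Quotient.eq_zero_iff_mem.2 (Ideal.mem_span_singleton_self f)
    rw [← cancel_mono (f • 𝟙 (E⟦n⟧)), zero_comp, Linear.comp_smul, Category.comp_id, ← Category.id_comp g,
      ← Linear.smul_comp, h0, zero_comp]
  let e : E⟦(0 : ℤ)⟧ ≅ E := (shiftFunctorZero _ ℤ).app E
  rw [← cancel_mono e.inv, zero_comp]
  exact hc' 0 _
end Iso

section ZZTri
variable {T : Type u} [Category.{v} T] [HasZeroObject T] [HasShift T ℤ] [Preadditive T]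
  [∀ n : ℤ, (shiftFunctor T n).Additive] [Pretriangulated T]

lemma ZZ_precomp₁ {E A B C : T} {a : A ⟶ B} {b : B ⟶ C} {c : C ⟶ A⟦(1 : ℤ)⟧}
    (hT : Triangle.mk a b c ∈ distTriang T) (hC : C ∈ ZZ E) (n : ℤ) :
    Function.Bijective (fun g : B ⟶ E⟦n⟧ => a ≫ g) := by
  constructor
  · intro g g' h
    have h : a ≫ g = a ≫ g' := h
    obtain ⟨t, ht⟩ : ∃ t : C ⟶ E⟦n⟧, g - g' = b ≫ t := Triangle.yoneda_exact₂ _ hT (g - g') (by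
      show a ≫ (g - g') = 0
      rw [Preadditive.comp_sub, h, sub_self])
    rw [hC n t, comp_zero] at ht
    exact sub_eq_zero.1 ht
  · intro h
    obtain ⟨t, ht⟩ : ∃ t : B ⟶ E⟦n⟧, h = a ≫ t :=
      Triangle.yoneda_exact₂ _ (inv_rot_of_distTriang _ hT) h (ZZ_shift E (-1) hC n _)
    exact ⟨t, ht.symm⟩

lemma ZZ_precomp₂ {E A B C : T} {a : A ⟶ B} {b : B ⟶ C} {c : C ⟶ A⟦(1 : ℤ)⟧}
    (hT : Triangle.mk a b c ∈ distTriang T) (hA : A ∈ ZZ E) (n : ℤ) :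
    Function.Bijective (fun g : C ⟶ E⟦n⟧ => b ≫ g) := by
  constructor
  · intro g g' h
    have h : b ≫ g = b ≫ g' := h
    obtain ⟨t, ht⟩ : ∃ t : A⟦(1 : ℤ)⟧ ⟶ E⟦n⟧, g - g' = c ≫ t := Triangle.yoneda_exact₃ _ hT (g - g') (by
      show b ≫ (g - g') = 0
      rw [Preadditive.comp_sub, h, sub_self])
    rw [ZZ_shift E 1 hA n t, comp_zero] at ht
    exact sub_eq_zero.1 ht
  · intro h
    obtain ⟨t, ht⟩ : ∃ t : C ⟶ E⟦n⟧, h = b ≫ t :=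
      Triangle.yoneda_exact₂ _ hT h (hA n _)
    exact ⟨t, ht.symm⟩
end ZZTri

section Torsion
variable {R : Type u} [CommRing R] [HasDerivedCategory.{w'} (ModuleCat.{u} R)]
open DerivedCategory

/-- `f` acts bijectively on maps from `X` to shifts of `E` -/
def WW (f : R) (E X : DerivedCategory (ModuleCat.{u} R)) : Prop :=
  ∀ n : ℤ, Function.Bijective (fun g : X ⟶ E⟦n⟧ => f • g)

lemma WW_iso {f : R} {E X Y : DerivedCategory (ModuleCat.{u} R)} (e : X ≅ Y) (h : WW f E X) : WW f E Y := by
  intro n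
  constructor
  · intro g g' hg
    have hg : f • g = f • g' := hg
    rw [← cancel_epi e.hom]
    apply (h n).1
    show f • (e.hom ≫ g) = f • (e.hom ≫ g')
    rw [← Linear.comp_smul, hg, Linear.comp_smul]
  · intro g
    obtain ⟨t, ht⟩ := (h n).2 (e.hom ≫ g)
    have ht : f • t = e.hom ≫ g := ht
    refine ⟨e.inv ≫ t, ?_⟩
    show f • (e.inv ≫ t) = g
    rw [← Linear.comp_smul, ht, e.inv_hom_id_assoc]

lemma WW_shift {f : R} {E X : DerivedCategory (ModuleCat.{u} R)} (m : ℤ) (h : WW f E X) : WW f E (X⟦m⟧) := by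
  intro n
  let e : (E⟦n⟧)⟦-m⟧ ≅ E⟦n + -m⟧ := ((shiftFunctorAdd _ n (-m)).app E).symm
  let e' : (X⟦m⟧)⟦-m⟧ ≅ X := shiftShiftNeg X m
  let α : (X⟦m⟧ ⟶ E⟦n⟧) → (X ⟶ E⟦n + -m⟧) := fun g => e'.inv ≫ g⟦-m⟧' ≫ e.hom
  have hα : ∀ g, α (f • g) = f • α g := fun g => by
    simp only [α]
    rw [Functor.map_smul, Linear.smul_comp, Linear.comp_smul]
  have hi : Function.Injective α := fun g g' hg => by
    apply (shiftFunctor _ (-m)).map_injective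
    simpa [α] using hg
  have hs : Function.Surjective α := fun t => by
    obtain ⟨g, hg⟩ := (shiftFunctor _ (-m)).map_surjective (e'.hom ≫ t ≫ e.inv)
    exact ⟨g, by simp only [α]; rw [hg]; simp⟩
  constructor
  · intro g g' hg
    have hg : f • g = f • g' := hg
    apply hi
    apply (h _).1
    show f • α g = f • α g'
    rw [← hα, hg, hα]
  · intro g
    obtain ⟨t, ht⟩ := (h _).2 (α g)
    obtain ⟨t, rfl⟩ := hs t
    refine ⟨t, hi ?_⟩
    exact (hα t).trans ht

lemma WW_GG {f : R} {E : DerivedCategory (ModuleCat.{u} R)} (h : WW f E (smod R (ModuleCat.of R R))) (n : ℤ) :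
    WW f E (GG R n) := by
  obtain ⟨m, rfl⟩ : ∃ m, n = -m := ⟨-n, by simp⟩
  exact WW_iso (shiftSmodIso _ m) (WW_shift m h)

lemma isIso_of_WW {f : R} {E : DerivedCategory (ModuleCat.{u} R)} (h : WW f E (smod R (ModuleCat.of R R))) :
    IsIso (f • 𝟙 E) := by
  obtain ⟨C, b, c, hT⟩ := distinguished_cocone_triangle (f • 𝟙 E)
  refine isIso_of_hm _ (fun n => hm_bij_of_zero hT (fun k z => ?_) n)
  obtain ⟨g, y, rfl⟩ := GG_hits C k z
  suffices g = 0 by rw [this, hm_zero]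
  have hW := WW_GG h k
  have h1 : g ≫ c = 0 := by
    apply (hW 1).1
    show f • (g ≫ c) = f • (0 : GG R k ⟶ E⟦(1 : ℤ)⟧)
    have h31 : c ≫ (f • 𝟙 E)⟦(1 : ℤ)⟧' = 0 := comp_distTriang_mor_zero₃₁ _ hT
    rw [Functor.map_smul, CategoryTheory.Functor.map_id, Linear.comp_smul, Category.comp_id] at h31
    rw [← Linear.comp_smul, h31, comp_zero, smul_zero]
  obtain ⟨t, ht⟩ : ∃ t : GG R k ⟶ E, g = t ≫ b := Triangle.coyoneda_exact₃ _ hT g h1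
  let e : E⟦(0 : ℤ)⟧ ≅ E := (shiftFunctorZero _ ℤ).app E
  obtain ⟨s, hs⟩ := (hW 0).2 (t ≫ e.inv)
  have hs : f • s = t ≫ e.inv := hs
  have ht' : t = (s ≫ e.hom) ≫ (f • 𝟙 E) := by
    rw [Linear.comp_smul, Category.comp_id, ← Linear.smul_comp, hs, Category.assoc, e.inv_hom_id, Category.comp_id]
  have h12 : (f • 𝟙 E) ≫ b = 0 := comp_distTriang_mor_zero₁₂ _ hT
  rw [ht, ht', Category.assoc, h12, comp_zero]

lemma smod_iso_mem {L : Set (DerivedCategory (ModuleCat.{u} R))} (hL : IsLocalizingSub.{u} L)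
    {M N : ModuleCat.{u} R} (e : M ≅ N) (h : smod R M ∈ L) : smod R N ∈ L :=
  hL.mem_of_iso ((singleFunctor (ModuleCat.{u} R) 0).mapIso e) h

lemma torsion_mem {L : Set (DerivedCategory (ModuleCat.{u} R))} (hL : IsLocalizingSub.{u} L) (f : R)
    (h : smod R (ModuleCat.of R (R ⧸ Ideal.span {f})) ∈ L) (M : Type u) [AddCommGroup M] [Module R M]
    (hM : ∀ m : M, f • m = 0) : smod R (ModuleCat.of R M) ∈ L := by
  have ht : Module.IsTorsionBySet R M (Ideal.span {f} : Ideal R) := by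
    rw [Module.isTorsionBySet_span_singleton_iff]; exact fun m => hM m
  let _ := ht.module
  let e1 : ModuleCat.of R (R ⧸ Ideal.span {f}) ≅
      (ModuleCat.restrictScalars.{u} (Ideal.Quotient.mk (Ideal.span {f}))).obj
        (ModuleCat.of (R ⧸ Ideal.span {f}) (R ⧸ Ideal.span {f})) :=
    LinearEquiv.toModuleIso (X₁ := R ⧸ Ideal.span {f})
     { AddEquiv.refl (R ⧸ Ideal.span {f}) with
       map_smul' := fun r x => Algebra.smul_def r x }
  let e2 : (ModuleCat.restrictScalars.{u} (Ideal.Quotient.mk (Ideal.span {f}))).obj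
        (ModuleCat.of (R ⧸ Ideal.span {f}) M) ≅ ModuleCat.of R M :=
    LinearEquiv.toModuleIso (X₂ := M)
     { AddEquiv.refl M with
       map_smul' := fun r x => rfl }
  exact smod_iso_mem hL e2 (restrict_mem_single _ hL (smod_iso_mem hL e1 h) _)

lemma part1_WW (f : R) (E : DerivedCategory (ModuleCat.{u} R))
    (h : smod R (ModuleCat.of R (R ⧸ Ideal.span {f})) ∈ ZZ E) : WW f E (smod R (ModuleCat.of R R)) := by
  let I : Ideal R := Ideal.span {f}
  let m : R →ₗ[R] I := LinearMap.toSpanSingleton R I ⟨f, Ideal.mem_span_singleton_self f⟩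
  have hms : Function.Surjective m := by
    rintro ⟨x, hx⟩
    obtain ⟨a, rfl⟩ := Ideal.mem_span_singleton'.1 hx
    exact ⟨a, rfl⟩
  have hS1 := LinearMap.shortExact_shortComplexKer hms
  let S2 : ShortComplex (ModuleCat.{u} R) := ShortComplex.mk (ModuleCat.ofHom I.subtype) (ModuleCat.ofHom I.mkQ) (by
    ext x; exact (Submodule.Quotient.mk_eq_zero I).2 x.2)
  have hS2 : S2.ShortExact := ModuleCat.shortComplex_shortExact S2
    (LinearMap.exact_subtype_mkQ I) I.injective_subtype I.mkQ_surjective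
  have hk : smod R (ModuleCat.of R (LinearMap.ker m)) ∈ ZZ E := by
    refine torsion_mem (ZZ_isLocalizing E) f h _ (fun x => ?_)
    have := x.2
    rw [LinearMap.mem_ker] at this
    have h2 := congrArg Subtype.val this
    ext
    show f * (x : R) = 0
    rw [mul_comm]
    exact h2
  intro n
  have b2 := ZZ_precomp₁ hS2.singleTriangle_distinguished h n
  have b1 := ZZ_precomp₂ hS1.singleTriangle_distinguished hk n
  have b := b1.comp b2
  have key : ∀ g : (singleFunctor (ModuleCat.{u} R) 0).obj (ModuleCat.of R R) ⟶ E⟦n⟧,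
      f • g = (singleFunctor (ModuleCat.{u} R) 0).map (ModuleCat.ofHom m) ≫ 
        (singleFunctor (ModuleCat.{u} R) 0).map (ModuleCat.ofHom I.subtype) ≫ g := by
    intro g
    rw [← Category.assoc, ← Functor.map_comp]
    have : ModuleCat.ofHom m ≫ ModuleCat.ofHom I.subtype = f • 𝟙 (ModuleCat.of R R) := by
      ext; simp [m]
    rw [this, Functor.map_smul, CategoryTheory.Functor.map_id, Linear.smul_comp, Category.id_comp]
  have key' : (fun g : smod R (ModuleCat.of R R) ⟶ E⟦n⟧ => f • g) = _ := funext key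
  rw [key']
  exact b

lemma part1_mp (f : R) (E : DerivedCategory (ModuleCat.{u} R))
    (h : E ∈ rightOrth (Loc.{u} {smod R (ModuleCat.of R (R ⧸ Ideal.span {f}))})) : IsIso (f • 𝟙 E) := by
  apply isIso_of_WW
  apply part1_WW
  intro n g
  let X := smod R (ModuleCat.of R (R ⧸ Ideal.span {f}))
  let e : (E⟦n⟧)⟦-n⟧ ≅ E := shiftShiftNeg E n
  have h0 := h ((loc_isLocalizing _).shift_mem (-n) (subset_loc _ rfl)) (g⟦-n⟧' ≫ e.hom)
  apply (shiftFunctor _ (-n)).map_injective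
  rw [← cancel_mono e.hom, h0, Functor.map_zero, zero_comp]
end Torsion

section LocComplex
variable {R : Type u} [CommRing R] 
open DerivedCategory

lemma pow_smul_bijective {M : Type u} [AddCommGroup M] [Module R M] (f : R)
    (h : Function.Bijective (fun m : M => f • m)) (s : Submonoid.powers f) :
    Function.Bijective (fun m : M => (s : R) • m) := by
  obtain ⟨_, k, rfl⟩ := s
  show Function.Bijective (fun m : M => f ^ k • m)
  induction k with
  | zero =>
    simp only [pow_zero, one_smul]
    exact Function.bijective_id
  | succ k ih =>
    have := ih.comp h
    simpa [Function.comp_def, pow_succ, mul_smul] using this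

lemma quasi_loc {K L : CochainComplex (ModuleCat.{u} R) ℤ} (φ : K ⟶ L) (f : R)
    (hφ : ∀ n, IsLocalizedModule (Submonoid.powers f) (φ.f n).hom)
    (hK : ∀ n, Function.Bijective (fun m : K.homology n => f • m)) (n : ℤ) :
    Function.Bijective (HomologicalComplex.homologyMap φ n) := by
  have hKs := fun n => pow_smul_bijective f (hK n)
  have hLs : ∀ n (s : Submonoid.powers f), Function.Bijective (fun m : L.X n => (s : R) • m) := fun n s =>
    (Module.End.isUnit_iff _).1 (IsLocalizedModule.map_units (φ.f n).hom s)
  have comm : ∀ i j (x : K.X i), L.d i j (φ.f i x) = φ.f j (K.d i j x) := fun i j x => by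
    have := φ.comm i j
    exact congrArg (fun t => t.hom x) this
  have hex : ∀ n (x : K.X n), φ.f n x = 0 → ∃ c : Submonoid.powers f, (c : R) • x = 0 := fun n x hx => by
    obtain ⟨c, hc⟩ := IsLocalizedModule.exists_of_eq (S := Submonoid.powers f) (f := (φ.f n).hom) (x₁ := x) (x₂ := 0)
      (by rw [map_zero]; exact hx)
    exact ⟨c, by rw [smul_zero] at hc; exact hc⟩
  have hsu : ∀ n (y : L.X n), ∃ (x : K.X n) (s : Submonoid.powers f), (s : R) • y = φ.f n x := fun n y => by
    obtain ⟨x, hx⟩ := IsLocalizedModule.surj (Submonoid.powers f) (φ.f n).hom y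
    exact ⟨x.1, x.2, hx⟩
  have hLi : ∀ (s : Submonoid.powers f) (y : L.homology n), (s : R) • y = 0 → y = 0 := by
    intro s y hy
    obtain ⟨z, hz⟩ := HRep.exists_rep L n y
    obtain ⟨w, hw⟩ := (hz.smul (s : R)).eq_zero_iff.1 hy
    obtain ⟨w', rfl⟩ := (hLs _ s).2 w
    refine hz.eq_zero_iff.2 ⟨w', (hLs n s).1 ?_⟩
    show (s : R) • L.d (n-1) n w' = (s : R) • z
    rw [← hw, map_smul]
  constructor
  · rw [injective_iff_map_eq_zero]
    intro x hx
    obtain ⟨z, hz⟩ := HRep.exists_rep K n x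
    obtain ⟨w, hw⟩ := (hz.map φ).eq_zero_iff.1 hx
    obtain ⟨a, s, ha⟩ := hsu _ w
    obtain ⟨c, hc⟩ := hex n ((s : R) • z - K.d (n-1) n a) (by
      rw [map_sub, map_smul, ← hw, ← comm, ← ha, map_smul, sub_self])
    have h0 : (c : R) • (s : R) • x = 0 := by
      refine ((hz.smul (s : R)).smul (c : R)).eq_zero_iff.2 ⟨(c : R) • a, ?_⟩
      rw [map_smul, eq_comm, ← sub_eq_zero, ← smul_sub, hc]
    have h1 : (s : R) • x = 0 := (hKs n c).1 (by show (c : R) • (s : R) • x = (c : R) • (0 : K.homology n); rw [h0, smul_zero])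
    exact (hKs n s).1 (by show (s : R) • x = (s : R) • (0 : K.homology n); rw [h1, smul_zero])
  · intro y
    obtain ⟨z, hz⟩ := HRep.exists_rep L n y
    obtain ⟨a, s, ha⟩ := hsu _ z
    obtain ⟨c, hc⟩ := hex (n+1) (K.d n (n+1) a) (by
      rw [← comm, ← ha, map_smul, hz.d_eq_zero, smul_zero])
    obtain ⟨x0, hx0⟩ := HRep.exists_class (K := K) (n := n) (z := (c : R) • a) (by rw [map_smul, hc])
    obtain ⟨x1, hx1⟩ := (hKs n (c * s)).2 x0
    have hx1 : ((c * s : Submonoid.powers f) : R) • x1 = x0 := hx1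
    refine ⟨x1, sub_eq_zero.1 (hLi (c * s) _ ?_)⟩
    rw [smul_sub, ← map_smul, hx1, sub_eq_zero]
    refine (hx0.map φ).unique ?_
    rw [map_smul, ← ha, ← mul_smul]
    exact hz.smul _

/-- the localized complex, restricted to `R` -/
noncomputable def locK (f : R) (K : CochainComplex (ModuleCat.{u} R) ℤ) : CochainComplex (ModuleCat.{u} R) ℤ :=
  ((ModuleCat.restrictScalars.{u} (algebraMap R (Localization (Submonoid.powers f)))).mapHomologicalComplex
    (ComplexShape.up ℤ)).obj (((ModuleCat.localizedModuleFunctor.{u} (Submonoid.powers f)).mapHomologicalComplex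
      (ComplexShape.up ℤ)).obj K)

noncomputable def locKX (f : R) (M : ModuleCat.{u} R) :
    M ⟶ (ModuleCat.restrictScalars.{u} (algebraMap R (Localization (Submonoid.powers f)))).obj
      ((ModuleCat.localizedModuleFunctor.{u} (Submonoid.powers f)).obj M) :=
  ModuleCat.ofHom (Y := (ModuleCat.restrictScalars.{u} (algebraMap R (Localization (Submonoid.powers f)))).obj
      ((ModuleCat.localizedModuleFunctor.{u} (Submonoid.powers f)).obj M))
    { toFun := fun x => M.localizedModuleMkLinearMap (Submonoid.powers f) x
      map_add' := fun x y => map_add (M.localizedModuleMkLinearMap (Submonoid.powers f)) x y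
      map_smul' := fun r x => (map_smul (M.localizedModuleMkLinearMap (Submonoid.powers f)) r x).trans
        (algebraMap_smul (Localization (Submonoid.powers f)) r
          (M.localizedModuleMkLinearMap (Submonoid.powers f) x)).symm }

lemma locKX_isLoc (f : R) (M : ModuleCat.{u} R) : IsLocalizedModule (Submonoid.powers f) (locKX f M).hom := by
  let e : M.localizedModule (Submonoid.powers f) ≃ₗ[R]
      ((ModuleCat.restrictScalars.{u} (algebraMap R (Localization (Submonoid.powers f)))).obj
      ((ModuleCat.localizedModuleFunctor.{u} (Submonoid.powers f)).obj M) : ModuleCat.{u} R) :=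
    { toFun := fun x => x
      invFun := fun x => x
      left_inv := fun _ => rfl
      right_inv := fun _ => rfl
      map_add' := fun _ _ => rfl
      map_smul' := fun r x => (algebraMap_smul (Localization (Submonoid.powers f)) r x).symm }
  exact IsLocalizedModule.of_linearEquiv (Submonoid.powers f)
    (M.localizedModuleMkLinearMap (Submonoid.powers f)) e

lemma locKX_comm (f : R) {M N : ModuleCat.{u} R} (g : M ⟶ N) :
    locKX f M ≫ (ModuleCat.restrictScalars.{u} (algebraMap R (Localization (Submonoid.powers f)))).map
      ((ModuleCat.localizedModuleFunctor.{u} (Submonoid.powers f)).map g) = g ≫ locKX f N := by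
  ext x
  exact IsLocalizedModule.map_apply (Submonoid.powers f) (M.localizedModuleMkLinearMap (Submonoid.powers f))
    (N.localizedModuleMkLinearMap (Submonoid.powers f)) g.hom x

noncomputable def locKι (f : R) (K : CochainComplex (ModuleCat.{u} R) ℤ) : K ⟶ locK f K where
  f n := locKX f (K.X n)
  comm' i j _ := locKX_comm f (K.d i j)

variable [HasDerivedCategory.{w'} (ModuleCat.{u} R)]

lemma part2_mpr (f : R) (E : DerivedCategory (ModuleCat.{u} R)) 
    (h : ∀ n, Function.Bijective (fun m : (HH n).obj E => f • m)) :
    E ∈ Loc.{u} {smod R (ModuleCat.of R (Localization.Away f))} := by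
  obtain ⟨K, ⟨e⟩⟩ : ∃ K, Nonempty (Q.obj K ≅ E) := ⟨_, ⟨Q.objObjPreimageIso E⟩⟩
  have hE : IsIso (f • 𝟙 (Q.obj K)) := (smul_isLocalizing f).mem_of_iso e.symm ((isIso_smul_iff f E).2 h)
  have hK : ∀ n, Function.Bijective (fun m : K.homology n => f • m) := by
    intro n
    have h1 := (isIso_smul_iff f _).1 hE n
    have h2 := ((hEquiv K n).bijective.comp h1).comp (hEquiv K n).symm.bijective
    have : (fun m : K.homology n => f • m) =
      (hEquiv K n ∘ (fun m : (HH n).obj (Q.obj K) => f • m)) ∘ (hEquiv K n).symm := by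
      funext m
      simp
    rw [this]; exact h2
  have hq : QuasiIso (locKι f K) := quasiIso_of_bijective _ (quasi_loc (locKι f K) f (fun n => locKX_isLoc f _) hK)
  have hi : IsIso (Q.map (locKι f K)) := inferInstance
  have hL := loc_isLocalizing.{u} {smod R (ModuleCat.of R (Localization.Away f))}
  refine hL.mem_of_iso ((asIso (Q.map (locKι f K))).symm ≪≫ e) ?_
  let l1 : Localization.Away f ≃ₗ[R]
      ((ModuleCat.restrictScalars.{u} (algebraMap R (Localization (Submonoid.powers f)))).obj
        (ModuleCat.of (Localization (Submonoid.powers f)) (Localization (Submonoid.powers f))) : ModuleCat.{u} R) :=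
    { toFun := fun x => x
      invFun := fun x => x
      left_inv := fun _ => rfl
      right_inv := fun _ => rfl
      map_add' := fun _ _ => rfl
      map_smul' := fun r x => Algebra.smul_def (A := Localization.Away f) r x }
  let e1 : ModuleCat.of R (Localization.Away f) ≅
      (ModuleCat.restrictScalars.{u} (algebraMap R (Localization (Submonoid.powers f)))).obj
        (ModuleCat.of (Localization (Submonoid.powers f)) (Localization (Submonoid.powers f))) :=
    { hom := ModuleCat.ofHom (Y := (ModuleCat.restrictScalars.{u} (algebraMap R (Localization (Submonoid.powers f)))).obj
        (ModuleCat.of (Localization (Submonoid.powers f)) (Localization (Submonoid.powers f)))) l1.toLinearMap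
      inv := ModuleCat.ofHom (X := (ModuleCat.restrictScalars.{u} (algebraMap R (Localization (Submonoid.powers f)))).obj
        (ModuleCat.of (Localization (Submonoid.powers f)) (Localization (Submonoid.powers f)))) l1.symm.toLinearMap
      hom_inv_id := rfl
      inv_hom_id := rfl }
  exact restrict_mem _ hL (smod_iso_mem hL e1 (subset_loc _ rfl)) _

end LocComplex

/-- Theorem: for `f ∈ R`, a complex `E` in `D(R)` belongs to
`Loc(R/(f))^⊥ = Loc(R_f)` if and only if multiplication by `f` is bijective on
every homology module `Hₙ(E)` (i.e. each `Hₙ(E)` is an `R_f`-module). -/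
theorem mem_loc_localization_iff_smul_bijective_homology (R : Type u) [CommRing R]
    [HasDerivedCategory.{w'} (ModuleCat.{u} R)] (f : R)
    (E : DerivedCategory (ModuleCat.{u} R)) :
    (E ∈ rightOrth (Loc.{u} {smod R (ModuleCat.of R (R ⧸ Ideal.span {f}))}) ↔
      ∀ n : ℤ, Function.Bijective
        (fun m : ↥((DerivedCategory.homologyFunctor (ModuleCat.{u} R) n).obj E) =>
          f • m)) ∧
    (E ∈ Loc.{u} {smod R (ModuleCat.of R (Localization.Away f))} ↔
      ∀ n : ℤ, Function.Bijective
        (fun m : ↥((DerivedCategory.homologyFunctor (ModuleCat.{u} R) n).obj E) =>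
          f • m)) := by
  exact ⟨⟨fun h => (isIso_smul_iff f E).1 (part1_mp f E h), fun h => part1_mpr f E ((isIso_smul_iff f E).2 h)⟩,
    ⟨fun h => (isIso_smul_iff f E).1 (part2_mp f E h), fun h => part2_mpr f E h⟩⟩
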